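/- Let (X,d) and (X*,d*) be hyperbolic metric spaces with bounded growth at some scale. Then there exists a constant L ≥ 1 such that for every Borel probability measure ν on ∂X × ∂X* and every Borel set F ⊆ ∂X × ∂X* with ν(F) > 0, the following holds: for ν-almost every ξ̄ ∈ F there exists r(ξ̄) > 0 such that for every r ∈ (0, r(ξ̄)), ν(F ∩ B̄(ξ̄, Lr)) ≥ (9/10) ν(B̄(ξ̄, r)). -/

import Mathlib

open MeasureTheory Filter Topology Metric Set
open scoped ENNReal Classical

noncomputable section

namespace HMDim

/-! ### Gromov products and hyperbolicity -/

/-- The Gromov product `(x|y)_o = (d(x,o)+d(o,y)-d(x,y))/2`. -/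
def gp {X : Type*} [MetricSpace X] (o x y : X) : ℝ :=
  (dist x o + dist o y - dist x y) / 2

/-- `X` is `δ`-hyperbolic. -/
def IsHyperbolicWith (X : Type*) [MetricSpace X] (δ : ℝ) : Prop :=
  ∀ x y z w : X, min (gp w x z) (gp w z y) - δ ≤ gp w x y

/-- `X` is hyperbolic: `δ`-hyperbolic for some `δ ≥ 0`. -/
def IsHyperbolic (X : Type*) [MetricSpace X] : Prop :=
  ∃ δ : ℝ, 0 ≤ δ ∧ IsHyperbolicWith X δ

/-- `X` is `C`-roughly geodesic for some `C ≥ 0`: any two points are joined by a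
`C`-rough geodesic. -/
def IsRoughGeodesicSpace (X : Type*) [MetricSpace X] : Prop :=
  ∃ C : ℝ, 0 ≤ C ∧ ∀ x y : X, ∃ (b : ℝ) (γ : ℝ → X), 0 ≤ b ∧ γ 0 = x ∧ γ b = y ∧
    ∀ s ∈ Set.Icc (0:ℝ) b, ∀ t ∈ Set.Icc (0:ℝ) b, abs (dist (γ s) (γ t) - |s - t|) ≤ C

/-- Bounded growth at some scale: there are `0 < r < R` and `N` such that every ball of
radius `R` is covered by at most `N` balls of radius `r`. -/
def HasBoundedGrowthAtSomeScale (X : Type*) [MetricSpace X] : Prop :=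
  ∃ (r R : ℝ) (N : ℕ), 0 < r ∧ r < R ∧
    ∀ x : X, ∃ s : Finset X, s.card ≤ N ∧ Metric.ball x R ⊆ ⋃ y ∈ s, Metric.ball y r

/-! ### The Gromov boundary -/

/-- A sequence is divergent if it is Cauchy for the Gromov-product quasi-metric, i.e.
`(u n | u m)_o → ∞`. -/
def IsDivergent {X : Type*} [MetricSpace X] (o : X) (u : ℕ → X) : Prop :=
  Tendsto (fun pr : ℕ × ℕ => gp o (u pr.1) (u pr.2)) atTop atTop

/-- The type of divergent sequences. -/
def DivSeq (X : Type*) [MetricSpace X] (o : X) : Type _ := {u : ℕ → X // IsDivergent o u}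

/-- Two divergent sequences are equivalent when `(u n | v m)_o → ∞`. -/
def bndRel {X : Type*} [MetricSpace X] (o : X) (u v : DivSeq X o) : Prop :=
  Tendsto (fun pr : ℕ × ℕ => gp o (u.1 pr.1) (v.1 pr.2)) atTop atTop

/-- The Gromov boundary: equivalence classes of divergent sequences. -/
def Boundary (X : Type*) [MetricSpace X] (o : X) : Type _ := Quot (bndRel o)

/-- The boundary point of a divergent sequence. -/
def mkB {X : Type*} [MetricSpace X] (o : X) (u : DivSeq X o) : Boundary X o :=
  Quot.mk _ u

/-- The extended Gromov product of two boundary points: the infimum over pairs of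
representatives of the liminf of Gromov products. -/
def gpB {X : Type*} [MetricSpace X] (o : X) (ξ η : Boundary X o) : ℝ :=
  sInf {t : ℝ | ∃ u v : DivSeq X o, mkB o u = ξ ∧ mkB o v = η ∧
    t = Filter.liminf (fun pr : ℕ × ℕ => gp o (u.1 pr.1) (v.1 pr.2)) atTop}

/-- The quasi-metric `q(ξ,η) = exp(-(ξ|η)_o)` on the boundary (`0` on the diagonal). -/
def qB {X : Type*} [MetricSpace X] (o : X) (ξ η : Boundary X o) : ℝ :=
  if ξ = η then 0 else Real.exp (-(gpB o ξ η))

/-- The extended Gromov product of an interior point with a boundary point. -/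
def gpXB {X : Type*} [MetricSpace X] (o : X) (x : X) (ξ : Boundary X o) : ℝ :=
  sInf {t : ℝ | ∃ u : DivSeq X o, mkB o u = ξ ∧
    t = Filter.liminf (fun m : ℕ => gp o x (u.1 m)) atTop}

/-- Quasi-metric between an interior point and a boundary point. -/
def qXB {X : Type*} [MetricSpace X] (o : X) (x : X) (ξ : Boundary X o) : ℝ :=
  Real.exp (-(gpXB o x ξ))

/-- The open ball of a quasi-metric. -/
def qball {A : Type*} (q : A → A → ℝ) (ξ : A) (r : ℝ) : Set A := {η | q ξ η < r}

/-- The max quasi-metric `q̄` on the product of two boundaries. -/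
def qbb {X Xs : Type*} [MetricSpace X] [MetricSpace Xs] (o : X) (os : Xs)
    (ξ η : Boundary X o × Boundary Xs os) : ℝ :=
  max (qB o ξ.1 η.1) (qB os ξ.2 η.2)

/-- Boundaries are measurable spaces, with the σ-algebra generated by quasi-metric balls. -/
instance (X : Type*) [MetricSpace X] (o : X) : MeasurableSpace (Boundary X o) :=
  MeasurableSpace.generateFrom {s | ∃ ξ r, s = qball (qB o) ξ r}

/-! ### The boundary action of isometries -/

lemma gp_isometry_le {X : Type*} [MetricSpace X] (o : X) (g : X ≃ᵢ X) (x y : X) :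
    gp o x y - dist o (g o) ≤ gp o (g x) (g y) := by
  have e1 : dist (g x) (g o) = dist x o := g.dist_eq x o
  have e2 : dist (g o) (g y) = dist o y := g.dist_eq o y
  have e3 : dist (g x) (g y) = dist x y := g.dist_eq x y
  have e4 : dist (g o) o = dist o (g o) := dist_comm _ _
  have t1 : dist (g x) (g o) ≤ dist (g x) o + dist o (g o) := dist_triangle _ _ _
  have t2 : dist (g o) (g y) ≤ dist (g o) o + dist o (g y) := dist_triangle _ _ _
  simp only [gp]
  linarith [t1, t2, e1, e2, e3, e4]

lemma isDivergent_comp {X : Type*} [MetricSpace X] (o : X) (g : X ≃ᵢ X) {u : ℕ → X}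
    (h : IsDivergent o u) : IsDivergent o fun n => g (u n) := by
  have h' := tendsto_atTop_add_const_right atTop (-(dist o (g o)))
    (h : Tendsto (fun pr : ℕ × ℕ => gp o (u pr.1) (u pr.2)) atTop atTop)
  refine tendsto_atTop_mono (fun pr => ?_) h'
  have := gp_isometry_le o g (u pr.1) (u pr.2)
  simpa [sub_eq_add_neg] using this

lemma bndRel_comp {X : Type*} [MetricSpace X] (o : X) (g : X ≃ᵢ X) {u v : DivSeq X o}
    (h : bndRel o u v) :
    bndRel o ⟨fun n => g (u.1 n), isDivergent_comp o g u.2⟩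
      ⟨fun n => g (v.1 n), isDivergent_comp o g v.2⟩ := by
  have h' := tendsto_atTop_add_const_right atTop (-(dist o (g o)))
    (h : Tendsto (fun pr : ℕ × ℕ => gp o (u.1 pr.1) (v.1 pr.2)) atTop atTop)
  refine tendsto_atTop_mono (fun pr => ?_) h'
  have := gp_isometry_le o g (u.1 pr.1) (v.1 pr.2)
  simpa [sub_eq_add_neg] using this

/-- The induced action of an isometry on the Gromov boundary. -/
def bAct {X : Type*} [MetricSpace X] (o : X) (g : X ≃ᵢ X) :
    Boundary X o → Boundary X o :=
  Quot.map (fun u : DivSeq X o =>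
      (⟨fun n => g (u.1 n), isDivergent_comp o g u.2⟩ : DivSeq X o))
    (fun _ _ h => bndRel_comp o g h)

/-! ### Random walks on countable groups -/

/-- Convolution of two measures (as `ℝ≥0∞`-valued functions) on a group. -/
def conv {G : Type*} [Group G] (p q : G → ℝ≥0∞) : G → ℝ≥0∞ :=
  fun x => ∑' y : G, p y * q (y⁻¹ * x)

/-- The `n`-fold convolution power `π_n` of `p`. -/
def piN {G : Type*} [Group G] (p : G → ℝ≥0∞) : ℕ → G → ℝ≥0∞
  | 0 => fun x => if x = 1 then 1 else 0
  | n + 1 => conv (piN p n) p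

/-- The Shannon entropy `H(π_n)` of the `n`-th convolution power. -/
def entropySeq {G : Type*} [Group G] (p : G → ℝ≥0∞) (n : ℕ) : ℝ :=
  ∑' x : G, Real.negMulLog ((piN p n x).toReal)

/-- The first moment of `π_n` with respect to a displacement function `f`. -/
def momentSeq {G : Type*} [Group G] (p : G → ℝ≥0∞) (f : G → ℝ) (n : ℕ) : ℝ :=
  ∑' x : G, (piN p n x).toReal * f x

/-- `h` is the asymptotic entropy of the `p`-random walk:
`h = lim (1/n) H(π_n)`. -/
def HasEntropy {G : Type*} [Group G] (p : G → ℝ≥0∞) (h : ℝ) : Prop :=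
  Tendsto (fun n : ℕ => entropySeq p n / n) atTop (nhds h)

/-- `l` is the drift (rate of escape) of the `p`-random walk with respect to the
displacement `f`: `l = lim (1/n) Σ_x f(x) π_n(x)`. -/
def HasDrift {G : Type*} [Group G] (p : G → ℝ≥0∞) (f : G → ℝ) (l : ℝ) : Prop :=
  Tendsto (fun n : ℕ => momentSeq p f n / n) atTop (nhds l)

/-- `p` is a probability distribution. -/
def IsProb {G : Type*} (p : G → ℝ≥0∞) : Prop := ∑' x : G, p x = 1

/-- Finite first moment with respect to a displacement function `f`. -/
def FiniteFirstMoment {G : Type*} (p : G → ℝ≥0∞) (f : G → ℝ) : Prop :=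
  ∑' x : G, p x * ENNReal.ofReal (f x) ≠ ∞

/-- The pushforward of a distribution `p` by a map `f` (e.g. a marginal). -/
def marginalStar {G A : Type*} (p : G → ℝ≥0∞) (f : G → A) : A → ℝ≥0∞ :=
  fun a => ∑' x : G, if f x = a then p x else 0

/-- A subgroup is non-elementary (in the relevant sense) if it contains a free
subgroup of rank 2. -/
def IsNonElementarySubgroup {G : Type*} [Group G] (H : Subgroup G) : Prop :=
  ∃ φ : FreeGroup (Fin 2) →* G, Function.Injective φ ∧ φ.range ≤ H

/-- A measure `p` on a group is non-elementary if the subgroup generated by its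
support contains a free subgroup of rank 2. -/
def IsNonElemMeasure {G : Type*} [Group G] (p : G → ℝ≥0∞) : Prop :=
  IsNonElementarySubgroup (Subgroup.closure {x : G | p x ≠ 0})

/-- A group containing a free subgroup of rank 2 (a non-elementary group). -/
def HasFreeSubgroup (G : Type*) [Group G] : Prop :=
  ∃ φ : FreeGroup (Fin 2) →* G, Function.Injective φ

/-! ### Path space -/

/-- The position `w_n = x_1 ⋯ x_n` of the random walk with increments `ω`. -/
def walk {G : Type*} [Group G] (ω : ℕ → G) (n : ℕ) : G := ((List.range n).map ω).prod

/-- The cylinder set `[w̄_0, …, w̄_n]` of trajectories whose positions agree with those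
of `ω` up to time `n`. -/
def cyl {G : Type*} [Group G] (ω : ℕ → G) (n : ℕ) : Set (ℕ → G) :=
  {ω' | ∀ i ≤ n, walk ω' i = walk ω i}

/-- `P` is the distribution of the increments of the `p`-random walk: the product
measure `p^{⊗ℕ}` on the path space. -/
def IsRWMeasure {G : Type*} [Group G] [MeasurableSpace G] (p : G → ℝ≥0∞)
    (P : Measure (ℕ → G)) : Prop :=
  IsProbabilityMeasure P ∧
    ∀ (n : ℕ) (g : ℕ → G), P {ω | ∀ i < n, ω i = g i} = ∏ i ∈ Finset.range n, p (g i)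

/-- `ν` is the harmonic measure on the boundary of `X` for the random walk with path
measure `P` and orbit map `z`: the image of `P` under the a.s.-defined boundary map. -/
def IsHarmonic {Ω X : Type*} [MeasurableSpace Ω] [MetricSpace X] (o : X)
    (P : Measure Ω) (z : Ω → ℕ → X) (ν : Measure (Boundary X o)) : Prop :=
  ∃ bnd : Ω → Boundary X o, Measurable bnd ∧ ν = P.map bnd ∧
    ∀ᵐ ω ∂P, ∃ h : IsDivergent o (z ω), bnd ω = mkB o ⟨z ω, h⟩

/-- `ν` is the harmonic measure on the product of the boundaries of `X` and `Xs` for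
the random walk with path measure `P` and orbit maps `z`, `zs`. -/
def IsJointHarmonic {Ω X Xs : Type*} [MeasurableSpace Ω] [MetricSpace X] [MetricSpace Xs]
    (o : X) (os : Xs) (P : Measure Ω) (z : Ω → ℕ → X) (zs : Ω → ℕ → Xs)
    (ν : Measure (Boundary X o × Boundary Xs os)) : Prop :=
  ∃ bnd : Ω → Boundary X o × Boundary Xs os, Measurable bnd ∧ ν = P.map bnd ∧
    ∀ᵐ ω ∂P, ∃ (h1 : IsDivergent o (z ω)) (h2 : IsDivergent os (zs ω)),
      bnd ω = (mkB o ⟨z ω, h1⟩, mkB os ⟨zs ω, h2⟩)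

/-- `cond` is a disintegration (system of conditional measures) of `P` with respect to
the map `f`, over the pushforward `νB = f_* P`. -/
def IsDisintegration {A B : Type*} [MeasurableSpace A] [MeasurableSpace B]
    (P : Measure A) (f : A → B) (νB : Measure B) (cond : B → Measure A) : Prop :=
  νB = P.map f ∧ (∀ᵐ b ∂νB, IsProbabilityMeasure (cond b)) ∧
    (∀ᵐ b ∂νB, cond b (f ⁻¹' {b}) = 1) ∧
    ∀ s : Set A, MeasurableSet s → P s = ∫⁻ b, cond b s ∂νB

/-! ### Hausdorff dimension for quasi-metrics -/

/-- Diameter of a set for a quasi-metric. -/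
def qdiam {A : Type*} (q : A → A → ℝ) (E : Set A) : ℝ≥0∞ :=
  ⨆ x ∈ E, ⨆ y ∈ E, ENNReal.ofReal (q x y)

/-- Hausdorff pre-measure (content) at scale `Δ`. -/
def qHContent {A : Type*} (q : A → A → ℝ) (α Δ : ℝ) (E : Set A) : ℝ≥0∞ :=
  ⨅ (c : ℕ → Set A) (_ : E ⊆ ⋃ i, c i) (_ : ∀ i, qdiam q (c i) ≤ ENNReal.ofReal Δ),
    ∑' i, qdiam q (c i) ^ α

/-- The `α`-dimensional Hausdorff measure of a set for a quasi-metric. -/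
def qHMeasure {A : Type*} (q : A → A → ℝ) (α : ℝ) (E : Set A) : ℝ≥0∞ :=
  ⨆ (Δ : ℝ) (_ : 0 < Δ), qHContent q α Δ E

/-- The Hausdorff dimension of a set for a quasi-metric. -/
def qdimSet {A : Type*} (q : A → A → ℝ) (E : Set A) : ℝ :=
  sSup {α : ℝ | 0 ≤ α ∧ 0 < qHMeasure q α E}

/-- The upper Hausdorff dimension of a measure. -/
def qdimUpper {A : Type*} [MeasurableSpace A] (q : A → A → ℝ) (ν : Measure A) : ℝ :=
  sInf {d : ℝ | ∃ E : Set A, MeasurableSet E ∧ ν Eᶜ = 0 ∧ d = qdimSet q E}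

/-- The lower Hausdorff dimension of a measure. -/
def qdimLower {A : Type*} [MeasurableSpace A] (q : A → A → ℝ) (ν : Measure A) : ℝ :=
  sInf {d : ℝ | ∃ E : Set A, MeasurableSet E ∧ 0 < ν E ∧ d = qdimSet q E}

/-- The Hausdorff dimension of `ν` exists and equals `D`. -/
def HasDim {A : Type*} [MeasurableSpace A] (q : A → A → ℝ) (ν : Measure A) (D : ℝ) : Prop :=
  qdimUpper q ν = D ∧ qdimLower q ν = D

/-- `ν` is exact dimensional with dimension `D` for the quasi-metric `q`:
`lim_{r→0} log ν(B(ξ,r))/log r = D` for `ν`-a.e. `ξ`. -/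
def ExactDim {A : Type*} [MeasurableSpace A] (q : A → A → ℝ) (ν : Measure A) (D : ℝ) : Prop :=
  ∀ᵐ ξ ∂ν, Tendsto (fun r : ℝ => Real.log (ν (qball q ξ r)).toReal / Real.log r)
    (nhdsWithin 0 (Set.Ioi 0)) (nhds D)

/-! ### Differential entropy -/

/-- The differential entropy
`h(∂X*, μ*) = Σ_g μ*(g) ∫ log (d gν/dν) d(gν)` of a measure on the isometry group with
respect to a boundary measure. -/
def diffEntropy {Xs : Type*} [MetricSpace Xs] (os : Xs) (pstar : (Xs ≃ᵢ Xs) → ℝ≥0∞)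
    (νs : Measure (Boundary Xs os)) : ℝ :=
  ∑' g : (Xs ≃ᵢ Xs), (pstar g).toReal *
    ∫ η, Real.log ((Measure.rnDeriv (νs.map (bAct os g)) νs η).toReal)
      ∂(νs.map (bAct os g))

/-! ### Word metrics and hyperbolic groups -/

/-- The word length of `g` with respect to a (symmetrized) generating set `S`. -/
def wordLength {G : Type*} [Group G] (S : Set G) (g : G) : ℕ :=
  sInf {n : ℕ | ∃ f : Fin n → G, (∀ i, f i ∈ S ∨ (f i)⁻¹ ∈ S) ∧ g = (List.ofFn f).prod}

/-- The metric of `G` is quasi-isometric to a word metric of a finite generating set. -/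
def IsQIToWordMetric (G : Type*) [Group G] [MetricSpace G] : Prop :=
  ∃ S : Finset G, Subgroup.closure (S : Set G) = ⊤ ∧
    ∃ Λ c : ℝ, 1 ≤ Λ ∧ 0 ≤ c ∧ ∀ g : G,
      (wordLength (S : Set G) g : ℝ) / Λ - c ≤ dist (1 : G) g ∧
      dist (1 : G) g ≤ Λ * (wordLength (S : Set G) g) + c

/-- The metric of `G` is left invariant. -/
def LeftInvariantMetric (G : Type*) [Group G] [MetricSpace G] : Prop :=
  ∀ g x y : G, dist (g * x) (g * y) = dist x y

/-- `G`, with its metric, is a hyperbolic group: the metric is left invariant,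
hyperbolic and quasi-isometric to a word metric. -/
def IsHypGroupMetric (G : Type*) [Group G] [MetricSpace G] : Prop :=
  LeftInvariantMetric G ∧ IsHyperbolic G ∧ IsQIToWordMetric G

/-! ### Groups of isometries of a product -/

/-- First component of an element of a subgroup of `Isom X × Isom X*`. -/
def proj1 {X Xs : Type*} [MetricSpace X] [MetricSpace Xs]
    {Γb : Subgroup ((X ≃ᵢ X) × (Xs ≃ᵢ Xs))} (γ : Γb) : X ≃ᵢ X :=
  (γ : (X ≃ᵢ X) × (Xs ≃ᵢ Xs)).1

/-- Second component of an element of a subgroup of `Isom X × Isom X*`. -/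
def proj2 {X Xs : Type*} [MetricSpace X] [MetricSpace Xs]
    {Γb : Subgroup ((X ≃ᵢ X) × (Xs ≃ᵢ Xs))} (γ : Γb) : Xs ≃ᵢ Xs :=
  (γ : (X ≃ᵢ X) × (Xs ≃ᵢ Xs)).2

/-- Displacement `d̄(ō, γ·ō)` of the base point `ō = (o,o*)` (the metric of the product
is the max metric). -/
def disp {X Xs : Type*} [MetricSpace X] [MetricSpace Xs]
    {Γb : Subgroup ((X ≃ᵢ X) × (Xs ≃ᵢ Xs))} (o : X) (os : Xs) (γ : Γb) : ℝ :=
  dist (o, os) (proj1 γ o, proj2 γ os)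

/-- Finite exponential growth relative to a displacement function `f`:
`#{x : f(x) < r} ≤ c e^{c r}`. -/
def FinExpGrowth {G : Type*} (f : G → ℝ) : Prop :=
  ∃ c : ℝ, 0 < c ∧ ∀ r : ℝ, 0 < r →
    {x : G | f x < r}.Finite ∧ ({x : G | f x < r}.ncard : ℝ) ≤ c * Real.exp (c * r)

/-! ### The events of Lemmas `A` and `E_n(η)` -/

/-- The event `A_{ε,n} = ∩_{t ≥ n} {z̄_∞ exists and q̄(z̄_t, z̄_∞) ≤ e^{-(l*-ε)n}}`. -/
def Aev {X Xs : Type*} [MetricSpace X] [MetricSpace Xs]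
    (Γb : Subgroup ((X ≃ᵢ X) × (Xs ≃ᵢ Xs))) (o : X) (os : Xs) (ε lst : ℝ) (n : ℕ) :
    Set (ℕ → Γb) :=
  {ω | ∃ (h1 : IsDivergent o (fun t => proj1 (walk ω t) o))
        (h2 : IsDivergent os (fun t => proj2 (walk ω t) os)),
      ∀ t, n ≤ t →
        max (qXB o (proj1 (walk ω t) o) (mkB o ⟨_, h1⟩))
            (qXB os (proj2 (walk ω t) os) (mkB os ⟨_, h2⟩))
          ≤ Real.exp (-((lst - ε) * n))}

/-- The event
`E_{ε,n}(η) = {P^η([w̄_0,…,w̄_n] ∩ A_{ε,n}) ≤ e^{n(h*+ε)} P([w̄_0,…,w̄_n] ∩ A_{ε,n})}`. -/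
def Eev {X Xs : Type*} [MetricSpace X] [MetricSpace Xs]
    (Γb : Subgroup ((X ≃ᵢ X) × (Xs ≃ᵢ Xs))) [MeasurableSpace Γb] (o : X) (os : Xs)
    (P : Measure (ℕ → Γb)) (condP : Boundary Xs os → Measure (ℕ → Γb))
    (hst ε lst : ℝ) (η : Boundary Xs os) (n : ℕ) : Set (ℕ → Γb) :=
  {ω | condP η (cyl ω n ∩ Aev Γb o os ε lst n) ≤
        ENNReal.ofReal (Real.exp (n * (hst + ε))) * P (cyl ω n ∩ Aev Γb o os ε lst n)}

/-! ### Special measures -/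

/-- The measure `π^ρ = ρ μ×μ + (1-ρ) μ_diag` on `Γ × Γ`. -/
def pRho {Γ : Type*} (p : Γ → ℝ≥0∞) (ρ : ℝ) : Γ × Γ → ℝ≥0∞ :=
  fun g => ENNReal.ofReal ρ * (p g.1 * p g.2) +
    ENNReal.ofReal (1 - ρ) * (if g.1 = g.2 then p g.1 else 0)

/-- The uniform distribution on the symmetrized free basis of `F_{m+1}`. -/
def symFreeBasisUniform (m : ℕ) : FreeGroup (Fin (m + 1)) → ℝ≥0∞ :=
  fun g => if ∃ i : Fin (m + 1), g = FreeGroup.of i ∨ g = (FreeGroup.of i)⁻¹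
    then ENNReal.ofReal (1 / (2 * (m + 1))) else 0

/-- The homomorphism `F_{m+1} → F_m` sending `x_i ↦ y_i` for `i ≤ m` and `x_{m+1} ↦ 1`. -/
def projHom (m : ℕ) : FreeGroup (Fin (m + 1)) →* FreeGroup (Fin m) :=
  FreeGroup.lift (fun i => if h : (i : ℕ) < m then FreeGroup.of (⟨i, h⟩ : Fin m) else 1)

/-! ### Abstract covering argument for quasi-metrics -/

/-- A set is open for a quasi-metric. -/
def QOpen {A : Type*} (q : A → A → ℝ) (U : Set A) : Prop :=
  ∀ x ∈ U, ∃ r : ℝ, 0 < r ∧ qball q x r ⊆ U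

/-- The properties of a quasi-metric which are needed. -/
structure GoodQ {A : Type*} [MeasurableSpace A] (q : A → A → ℝ) (K : ℝ) : Prop where
  one_le : 1 ≤ K
  self : ∀ x, q x x = 0
  tri : ∀ x y z, q y x ≤ K * max (q y z) (q x z)
  meas : ∀ x r, MeasurableSet (qball q x r)
  op : ∀ x r, QOpen q (qball q x r)

lemma GoodQ.nonneg {A : Type*} [MeasurableSpace A] {q : A → A → ℝ} {K : ℝ} (h : GoodQ q K)
    (x y : A) : 0 ≤ q x y := by
  have h1 := h.tri x x y
  have h2 := h.one_le
  rw [h.self, max_self] at h1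
  by_contra h3
  push Not at h3
  nlinarith

lemma GoodQ.symm_le {A : Type*} [MeasurableSpace A] {q : A → A → ℝ} {K : ℝ} (h : GoodQ q K)
    (x y : A) : q y x ≤ K * q x y := by
  have h1 := h.tri x y y
  rwa [h.self, max_eq_right (h.nonneg x y)] at h1

/-- Vitali covering. -/
lemma GoodQ.vitali {A : Type*} [MeasurableSpace A] {q : A → A → ℝ} {K : ℝ} (h : GoodQ q K)
    (ν : Measure A) [IsProbabilityMeasure ν] (E : Set A) (ρ : A → ℝ) (R : ℝ)
    (hρ : ∀ x ∈ E, 0 < ρ x) (hR : ∀ x ∈ E, ρ x ≤ R)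
    (hpos : ∀ x ∈ E, 0 < ν (qball q x (ρ x))) :
    ∃ u ⊆ E, u.Countable ∧ u.PairwiseDisjoint (fun x => qball q x (ρ x)) ∧
      ∀ x ∈ E, ∃ b ∈ u, x ∈ qball q b (3 * K * ρ b) := by
  obtain ⟨u, hu, hd, hc⟩ := Vitali.exists_disjoint_subfamily_covering_enlargement
    (fun x => qball q x (ρ x)) E ρ 2 one_lt_two (fun x hx => (hρ x hx).le) R hR
    (fun x hx => ⟨x, by simpa [qball, h.self] using hρ x hx⟩)
  refine ⟨u, hu, ?_, hd, ?_⟩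
  · have := Measure.countable_meas_pos_of_disjoint_iUnion (μ := ν)
      (As := fun x : u => qball q x.1 (ρ x.1)) (fun x => h.meas _ _)
      (fun x y hxy => hd x.2 y.2 (fun h => hxy (Subtype.ext h)))
    have h2 : {i : u | 0 < ν (qball q i.1 (ρ i.1))} = Set.univ := by
      ext x
      simpa using hpos x.1 (hu x.2)
    rw [h2, Set.countable_univ_iff] at this
    exact Set.countable_coe_iff.1 this
  · intro x hx
    obtain ⟨b, hb, ⟨z, hz1, hz2⟩, hδ⟩ := hc x hx
    refine ⟨b, hb, ?_⟩
    have hz1 : q x z < ρ x := hz1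
    have hz2 : q b z < ρ b := hz2
    have hρb := hρ b (hu hb)
    have h1 := h.tri x b z
    have h2 : max (q b z) (q x z) ≤ 2 * ρ b := max_le (by linarith) (by linarith)
    have hK := h.one_le
    change q b x < 3 * K * ρ b
    nlinarith [mul_le_mul_of_nonneg_left h2 (by linarith : (0:ℝ) ≤ K), mul_pos (by linarith : (0:ℝ) < K) hρb]

/-- The support of a measure for a quasi-metric. -/
def qsupp {A : Type*} [MeasurableSpace A] (q : A → A → ℝ) (ν : Measure A) : Set A :=
  {x | ∀ r : ℝ, 0 < r → 0 < ν (qball q x r)}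

/-- Outer regularity relative to the support. -/
def OReg {A : Type*} [MeasurableSpace A] (q : A → A → ℝ) (ν : Measure A) (F : Set A) : Prop :=
  ∀ ε : ℝ≥0∞, 0 < ε → ∃ U, MeasurableSet U ∧ F ∩ qsupp q ν ⊆ U ∧ QOpen q U ∧ ν (U \ F) < ε

lemma QOpen.biInter {A : Type*} [MeasurableSpace A] {q : A → A → ℝ}
    {V : ℕ → Set A} (hV : ∀ n, QOpen q (V n)) (n : ℕ) : QOpen q (⋂ k ≤ n, V k) := by
  intro x hx
  simp only [Set.mem_iInter] at hx
  induction n with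
  | zero =>
    obtain ⟨r, hr, h⟩ := hV 0 x (hx 0 le_rfl)
    refine ⟨r, hr, fun y hy => ?_⟩
    simp only [Set.mem_iInter]
    intro i hi
    obtain rfl : i = 0 := by omega
    exact h hy
  | succ n ih =>
    obtain ⟨r, hr, h⟩ := hV (n+1) x (hx _ le_rfl)
    obtain ⟨s, hs, h'⟩ := ih (fun i hi => hx i (by omega))
    refine ⟨min r s, lt_min hr hs, fun y hy => ?_⟩
    have hy : q x y < min r s := hy
    have h1 : y ∈ V (n+1) := h (hy.trans_le (min_le_left _ _))
    have h2 := h' (show y ∈ qball q x s from hy.trans_le (min_le_right _ _))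
    simp only [Set.mem_iInter] at h2 ⊢
    intro i hi
    rcases Nat.lt_or_ge n i with hi' | hi'
    · obtain rfl : i = n + 1 := by omega
      exact h1
    · exact h2 i hi'

lemma exists_biInter_diff_lt {A : Type*} [MeasurableSpace A] (ν : Measure A)
    [IsProbabilityMeasure ν] {V : ℕ → Set A} (hV : ∀ n, MeasurableSet (V n)) {C : Set A}
    (hC : MeasurableSet C) (hVC : ⋂ n, V n ⊆ C) {ε : ℝ≥0∞} (hε : 0 < ε) :
    ∃ n, ν ((⋂ k ≤ n, V k) \ C) < ε := by
  have hW : ∀ n, MeasurableSet ((⋂ k ≤ n, V k) \ C) := fun n =>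
    (MeasurableSet.iInter fun k => MeasurableSet.iInter fun _ => hV k).diff hC
  have h := tendsto_measure_iInter_atTop (μ := ν) (s := fun n : ℕ => (⋂ k ≤ n, V k) \ C)
    (fun n => (hW n).nullMeasurableSet) (by
      intro n m hnm x hx
      refine ⟨?_, hx.2⟩
      have h1 := hx.1
      simp only [Set.mem_iInter] at h1 ⊢
      exact fun i hi => h1 i (hi.trans hnm)) ⟨0, measure_ne_top _ _⟩
  have he : (⋂ n, (⋂ k ≤ n, V k) \ C) = ∅ := by
    ext x
    simp only [Set.mem_iInter, Set.mem_sdiff, Set.mem_empty_iff_false, iff_false]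
    intro hx
    exact (hx 0).2 (hVC (Set.mem_iInter.2 fun n => (hx n).1 n le_rfl))
  rw [he, measure_empty] at h
  exact ((h.eventually (gt_mem_nhds hε)).exists)

lemma GoodQ.oreg_open {A : Type*} [MeasurableSpace A] {q : A → A → ℝ} {K : ℝ} 
    (ν : Measure A) {B : Set A} (hB : QOpen q B) (hBm : MeasurableSet B) : OReg q ν B :=
  fun ε hε => ⟨B, hBm, Set.inter_subset_left, hB, by simpa using hε⟩

lemma GoodQ.oreg_compl {A : Type*} [MeasurableSpace A] {q : A → A → ℝ} {K : ℝ} (h : GoodQ q K)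
    (ν : Measure A) [IsProbabilityMeasure ν] {B : Set A} (hB : QOpen q B)
    (hBm : MeasurableSet B) : OReg q ν Bᶜ := by
  intro ε hε
  have hK := h.one_le
  have key : ∀ n : ℕ, ∃ u ⊆ Bᶜ ∩ qsupp q ν, u.Countable ∧
      ∀ x ∈ Bᶜ ∩ qsupp q ν, ∃ b ∈ u, x ∈ qball q b (1 / (n + 1)) := by
    intro n
    have hp : (0:ℝ) < 1 / (n + 1) := by positivity
    obtain ⟨u, hu, hc, -, hcov⟩ := h.vitali ν (Bᶜ ∩ qsupp q ν)
      (fun _ => (1 / (n + 1)) / (3 * K)) _ (fun x _ => by positivity) (fun x _ => le_rfl)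
      (fun x hx => hx.2 _ (by positivity))
    refine ⟨u, hu, hc, fun x hx => ?_⟩
    obtain ⟨b, hb, hxb⟩ := hcov x hx
    refine ⟨b, hb, ?_⟩
    rwa [mul_div_cancel₀ _ (by positivity)] at hxb
  choose u hu hc hcov using key
  set V : ℕ → Set A := fun n => ⋃ b ∈ u n, qball q b (1 / (n + 1)) with hVdef
  have hVm : ∀ n, MeasurableSet (V n) := fun n =>
    MeasurableSet.biUnion (hc n) fun b _ => h.meas _ _
  have hVo : ∀ n, QOpen q (V n) := by
    intro n x hx
    simp only [hVdef, Set.mem_iUnion] at hx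
    obtain ⟨b, hb, hx⟩ := hx
    obtain ⟨r, hr, hsub⟩ := h.op _ _ x hx
    exact ⟨r, hr, hsub.trans (Set.subset_biUnion_of_mem (u := fun b => qball q b (1 / ((n:ℝ) + 1))) hb)⟩
  have hVC : ⋂ n, V n ⊆ Bᶜ := by
    intro x hx hxB
    obtain ⟨s, hs, hsub⟩ := hB x hxB
    obtain ⟨n, hn⟩ := exists_nat_one_div_lt (show 0 < s / K by positivity)
    have hxn := Set.mem_iInter.1 hx n
    simp only [hVdef, Set.mem_iUnion] at hxn
    obtain ⟨b, hb, hxb⟩ := hxn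
    have hxb : q b x < 1 / (n + 1) := hxb
    have h1 := h.symm_le b x
    refine (hu n hb).1 (hsub ?_)
    change q x b < s
    have h2 : q b x < s / K := hxb.trans hn
    rw [lt_div_iff₀ (by positivity)] at h2
    linarith
  obtain ⟨n, hn⟩ := exists_biInter_diff_lt ν hVm hBm.compl hVC hε
  refine ⟨_, MeasurableSet.iInter fun k => MeasurableSet.iInter fun _ => hVm k, ?_,
    QOpen.biInter hVo n, hn⟩
  intro x hx
  simp only [Set.mem_iInter]
  intro i _
  obtain ⟨b, hb, hxb⟩ := hcov i x hx
  simp only [hVdef, Set.mem_iUnion]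
  exact ⟨b, hb, hxb⟩

lemma GoodQ.oreg_iUnion {A : Type*} [MeasurableSpace A] {q : A → A → ℝ}
    (ν : Measure A) {F : ℕ → Set A} (hF : ∀ n, OReg q ν (F n)) : OReg q ν (⋃ n, F n) := by
  intro ε hε
  obtain ⟨e, he, hsum⟩ := ENNReal.exists_pos_sum_of_countable hε.ne' ℕ
  choose U hU1 hU2 hU3 hU4 using fun n => hF n (e n) (by exact_mod_cast he n)
  refine ⟨⋃ n, U n, .iUnion hU1, ?_, ?_, ?_⟩
  · rw [Set.iUnion_inter]
    exact Set.iUnion_mono hU2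
  · intro x hx
    obtain ⟨n, hn⟩ := Set.mem_iUnion.1 hx
    obtain ⟨r, hr, hs⟩ := hU3 n x hn
    exact ⟨r, hr, hs.trans (Set.subset_iUnion _ n)⟩
  · have : (⋃ n, U n) \ (⋃ n, F n) ⊆ ⋃ n, (U n \ F n) := by
      intro x hx
      obtain ⟨n, hn⟩ := Set.mem_iUnion.1 hx.1
      exact Set.mem_iUnion.2 ⟨n, hn, fun h => hx.2 (Set.mem_iUnion.2 ⟨n, h⟩)⟩
    calc ν _ ≤ ν (⋃ n, (U n \ F n)) := measure_mono this
      _ ≤ ∑' n, ν (U n \ F n) := measure_iUnion_le _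
      _ ≤ ∑' n, (e n : ℝ≥0∞) := ENNReal.tsum_le_tsum fun n => (hU4 n).le
      _ < ε := hsum

lemma GoodQ.oreg_iInter {A : Type*} [MeasurableSpace A] {q : A → A → ℝ}
    (ν : Measure A) [IsProbabilityMeasure ν] {F : ℕ → Set A} (hF : ∀ n, OReg q ν (F n))
    (hm : ∀ n, MeasurableSet (F n)) : OReg q ν (⋂ n, F n) := by
  intro ε hε
  have hε2 : 0 < ε / 2 := ENNReal.half_pos hε.ne'
  obtain ⟨e, he, hsum⟩ := ENNReal.exists_pos_sum_of_countable hε2.ne' ℕ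
  choose U hU1 hU2 hU3 hU4 using fun n => hF n (e n) (by exact_mod_cast he n)
  obtain ⟨n, hn⟩ := exists_biInter_diff_lt ν hm (MeasurableSet.iInter hm) subset_rfl hε2
  refine ⟨⋂ k ≤ n, U k, MeasurableSet.iInter fun k => MeasurableSet.iInter fun _ => hU1 k, ?_,
    QOpen.biInter hU3 n, ?_⟩
  · intro x hx
    simp only [Set.mem_iInter]
    exact fun i _ => hU2 i ⟨Set.mem_iInter.1 hx.1 i, hx.2⟩
  · have : (⋂ k ≤ n, U k) \ (⋂ n, F n) ⊆
        ((⋂ k ≤ n, F k) \ (⋂ n, F n)) ∪ ⋃ n, (U n \ F n) := by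
      intro x hx
      by_cases hxx : x ∈ ⋂ k ≤ n, F k
      · exact Or.inl ⟨hxx, hx.2⟩
      · right
        simp only [Set.mem_iInter, not_forall] at hxx
        obtain ⟨i, hi, hxi⟩ := hxx
        have h1 := hx.1
        simp only [Set.mem_iInter] at h1
        exact Set.mem_iUnion.2 ⟨i, h1 i hi, hxi⟩
    calc ν _ ≤ _ := measure_mono this
      _ ≤ ν ((⋂ k ≤ n, F k) \ (⋂ n, F n)) + ν (⋃ n, (U n \ F n)) := measure_union_le _ _
      _ ≤ ν ((⋂ k ≤ n, F k) \ (⋂ n, F n)) + ∑' n, (e n : ℝ≥0∞) := by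
          gcongr
          exact (measure_iUnion_le _).trans (ENNReal.tsum_le_tsum fun n => (hU4 n).le)
      _ < ε / 2 + ε / 2 := ENNReal.add_lt_add hn hsum
      _ = ε := ENNReal.add_halves ε

lemma GoodQ.oreg {A : Type*} [mA : MeasurableSpace A] {q : A → A → ℝ} {K : ℝ} (h : GoodQ q K)
    (ν : Measure A) [IsProbabilityMeasure ν] (G : Set (Set A))
    (hG : mA = MeasurableSpace.generateFrom G) (hGo : ∀ s ∈ G, QOpen q s) (F : Set A)
    (hF : MeasurableSet F) : OReg q ν F := by
  have hle : ∀ s, MeasurableSet[MeasurableSpace.generateFrom G] s → MeasurableSet s := by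
    intro s hs
    rwa [hG]
  suffices OReg q ν F ∧ OReg q ν Fᶜ from this.1
  have hF' : MeasurableSet[MeasurableSpace.generateFrom G] F := by rwa [← hG]
  refine MeasurableSpace.generateFrom_induction G (fun s _ => OReg q ν s ∧ OReg q ν sᶜ)
    ?_ ?_ ?_ ?_ F hF'
  · intro s hs hsm
    exact ⟨GoodQ.oreg_open (K := K) ν (hGo s hs) (hle _ hsm), h.oreg_compl ν (hGo s hs) (hle _ hsm)⟩
  · have : QOpen q (∅ : Set A) := fun x hx => hx.elim
    exact ⟨GoodQ.oreg_open (K := K) ν this .empty, h.oreg_compl ν this .empty⟩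
  · intro t _ ht
    rw [compl_compl]
    exact ht.symm
  · intro s hs hp
    rw [Set.compl_iUnion]
    exact ⟨GoodQ.oreg_iUnion ν fun n => (hp n).1,
      GoodQ.oreg_iInter ν (fun n => (hp n).2) fun n => (hle _ (hs n)).compl⟩

lemma GoodQ.density {A : Type*} [mA : MeasurableSpace A] {q : A → A → ℝ} {K : ℝ}
    (h : GoodQ q K) (G : Set (Set A))
    (hG : mA = MeasurableSpace.generateFrom G) (hGo : ∀ s ∈ G, QOpen q s)
    (ν : Measure A) [IsProbabilityMeasure ν] (F : Set A) (hF : MeasurableSet F) :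
    ∀ᵐ ξ ∂ν, ξ ∈ F → ∃ r0 : ℝ, 0 < r0 ∧ ∀ r : ℝ, 0 < r → r < r0 →
        (9 / 10 : ℝ≥0∞) * ν (qball q ξ r) ≤ ν (F ∩ qball q ξ (3 * K * r)) := by
  have hK := h.one_le
  rw [ae_iff]
  set E := {a | ¬ (a ∈ F → ∃ r0 : ℝ, 0 < r0 ∧ ∀ r : ℝ, 0 < r → r < r0 →
        (9 / 10 : ℝ≥0∞) * ν (qball q a r) ≤ ν (F ∩ qball q a (3 * K * r)))} with hE
  have hEF : E ⊆ F := by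
    intro x hx
    simp only [hE, Set.mem_ofPred_eq] at hx
    push Not at hx
    exact hx.1
  have hbad : ∀ x ∈ E, ∀ r0 : ℝ, 0 < r0 → ∃ r : ℝ, 0 < r ∧ r < r0 ∧
      ν (F ∩ qball q x (3 * K * r)) < (9 / 10 : ℝ≥0∞) * ν (qball q x r) := by
    intro x hx
    simp only [hE, Set.mem_ofPred_eq] at hx
    push Not at hx
    exact hx.2
  have hpos : ∀ x r, ν (F ∩ qball q x (3 * K * r)) < (9 / 10 : ℝ≥0∞) * ν (qball q x r) →
      0 < ν (qball q x r) := by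
    intro x r hx
    by_contra h0
    simp only [not_lt, nonpos_iff_eq_zero] at h0
    simp [h0] at hx
  have hES : E ⊆ qsupp q ν := by
    intro x hx s hs
    obtain ⟨r, hr, hrs, hlt⟩ := hbad x hx s hs
    exact (hpos x r hlt).trans_le (measure_mono fun y (hy : q x y < r) => hy.trans hrs)
  have main : ∀ ε : ℝ≥0∞, 0 < ε → ν E ≤ 9 * ε := by
    intro ε hε
    obtain ⟨U, hU1, hU2, hU3, hU4⟩ := h.oreg ν G hG hGo F hF ε hε
    have : ∀ x, ∃ r : ℝ, x ∈ E → 0 < r ∧ r ≤ 1 ∧ qball q x r ⊆ U ∧ 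
        ν (F ∩ qball q x (3 * K * r)) < (9 / 10 : ℝ≥0∞) * ν (qball q x r) := by
      intro x
      by_cases hx : x ∈ E
      · obtain ⟨s, hs, hsU⟩ := hU3 x (hU2 ⟨hEF hx, hES hx⟩)
        obtain ⟨r, hr, hrs, hlt⟩ := hbad x hx (min s 1) (by positivity)
        exact ⟨r, fun _ => ⟨hr, hrs.le.trans (min_le_right _ _), Set.Subset.trans
          (fun y (hy : q x y < r) => hy.trans (hrs.trans_le (min_le_left _ _))) hsU, hlt⟩⟩
      · exact ⟨0, fun h => (hx h).elim⟩
    choose ρ hρ using this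
    obtain ⟨u, hu, hc, hd, hcov⟩ := h.vitali ν E ρ 1 (fun x hx => (hρ x hx).1)
      (fun x hx => (hρ x hx).2.1) (fun x hx => hpos _ _ (hρ x hx).2.2.2)
    have hone : ∀ b ∈ u, ν (F ∩ qball q b (3 * K * ρ b)) ≤ 9 * ν (qball q b (ρ b) \ F) := by
      intro b hb
      obtain ⟨hr, -, -, hlt⟩ := hρ b (hu hb)
      have h1 : ν (qball q b (ρ b) ∩ F) ≤ ν (F ∩ qball q b (3 * K * ρ b)) := by
        refine measure_mono fun y hy => ⟨hy.2, ?_⟩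
        have : q b y < ρ b := hy.1
        change q b y < 3 * K * ρ b
        nlinarith
      have h2 : ν (qball q b (ρ b)) = ν (qball q b (ρ b) ∩ F) + ν (qball q b (ρ b) \ F) :=
        (measure_inter_add_sdiff _ hF).symm
      have t1 := measure_ne_top ν (F ∩ qball q b (3 * K * ρ b))
      have t2 := measure_ne_top ν (qball q b (ρ b))
      have t3 := measure_ne_top ν (qball q b (ρ b) ∩ F)
      have t4 := measure_ne_top ν (qball q b (ρ b) \ F)
      have e9 : (9 / 10 : ℝ≥0∞) = ENNReal.ofReal (9/10) := by
        rw [ENNReal.ofReal_div_of_pos (by norm_num)]; norm_num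
      have e9' : (9 : ℝ≥0∞) = ENNReal.ofReal 9 := by norm_num
      rw [e9] at hlt
      rw [e9']
      generalize ν (F ∩ qball q b (3 * K * ρ b)) = a at *
      generalize ν (qball q b (ρ b)) = b at *
      generalize ν (qball q _ (ρ _) ∩ F) = c at *
      generalize ν (qball q _ (ρ _) \ F) = d at *
      lift a to NNReal using t1
      lift b to NNReal using t2
      lift c to NNReal using t3
      lift d to NNReal using t4
      simp only [ENNReal.ofReal] at *
      norm_cast at *
      rw [← NNReal.coe_le_coe] at *
      rw [← NNReal.coe_lt_coe] at hlt
      rw [← NNReal.coe_inj] at h2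
      push_cast at *
      norm_num at *
      linarith
    have : Countable u := hc.to_subtype
    calc ν E ≤ ν (⋃ b : u, F ∩ qball q b.1 (3 * K * ρ b.1)) := by
          refine measure_mono fun x hx => ?_
          obtain ⟨b, hb, hxb⟩ := hcov x hx
          exact Set.mem_iUnion.2 ⟨⟨b, hb⟩, hEF hx, hxb⟩
      _ ≤ ∑' b : u, ν (F ∩ qball q b.1 (3 * K * ρ b.1)) := measure_iUnion_le _
      _ ≤ ∑' b : u, 9 * ν (qball q b.1 (ρ b.1) \ F) :=
          ENNReal.tsum_le_tsum fun b => hone b.1 b.2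
      _ = 9 * ν (⋃ b : u, qball q b.1 (ρ b.1) \ F) := by
          rw [ENNReal.tsum_mul_left, measure_iUnion]
          · intro x y hxy
            exact (hd x.2 y.2 (fun h => hxy (Subtype.ext h))).mono Set.sdiff_subset Set.sdiff_subset
          · exact fun b => (h.meas _ _).diff hF
      _ ≤ 9 * ν (U \ F) := by
          gcongr
          exact Set.iUnion_subset fun b => Set.sdiff_subset_sdiff_left (hρ b.1 (hu b.2)).2.2.1
      _ ≤ 9 * ε := by gcongr
  by_contra hne
  have hp : 0 < ν E := pos_iff_ne_zero.2 hne
  have := main (ν E / 18) (ENNReal.div_pos hne (by norm_num))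
  have t := measure_ne_top ν E
  generalize ν E = e at *
  lift e to NNReal using t
  have e18 : (e : ℝ≥0∞) / 18 = ((e / 18 : NNReal) : ℝ≥0∞) := by
    rw [ENNReal.coe_div (by norm_num)]; norm_num
  rw [e18] at this
  norm_cast at *
  rw [← NNReal.coe_le_coe] at this
  rw [← NNReal.coe_pos] at hp
  push_cast at this
  linarith

/-! ### The Gromov boundary as a quasi-metric space -/

lemma evN (p : ℕ → ℕ → Prop) :
    (∀ᶠ pr : ℕ × ℕ in atTop, p pr.1 pr.2) ↔ ∃ N, ∀ n ≥ N, ∀ m ≥ N, p n m := by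
  rw [eventually_atTop]
  constructor
  · rintro ⟨⟨a, b⟩, h⟩
    refine ⟨max a b, fun n hn m hm => h (n, m) ⟨?_, ?_⟩⟩
    · exact (le_max_left _ _).trans hn
    · exact (le_max_right _ _).trans hm
  · rintro ⟨N, h⟩
    exact ⟨(N, N), fun pr hpr => h _ hpr.1 _ hpr.2⟩

lemma gp_comm {X : Type*} [MetricSpace X] (o x y : X) : gp o x y = gp o y x := by
  simp only [gp]
  rw [dist_comm x y, dist_comm x o, dist_comm o y]
  ring

lemma gp_nonneg {X : Type*} [MetricSpace X] (o x y : X) : 0 ≤ gp o x y := by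
  have := dist_triangle x o y
  simp only [gp]
  linarith

lemma tendsto_gp_iff {X : Type*} [MetricSpace X] (o : X) (x y : ℕ → X) :
    Tendsto (fun pr : ℕ × ℕ => gp o (x pr.1) (y pr.2)) atTop atTop ↔
      ∀ T : ℝ, ∃ N, ∀ n ≥ N, ∀ m ≥ N, T ≤ gp o (x n) (y m) := by
  rw [Filter.tendsto_atTop]
  exact forall_congr' fun T => evN (fun n m => T ≤ gp o (x n) (y m))

lemma bndRel_equivalence {X : Type*} [MetricSpace X] {δ : ℝ} (hδ : IsHyperbolicWith X δ)
    (o : X) : Equivalence (bndRel o) where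
  refl u := u.2
  symm := by
    intro u v h
    rw [bndRel, tendsto_gp_iff] at *
    intro T
    obtain ⟨N, hN⟩ := h T
    exact ⟨N, fun n hn m hm => by rw [gp_comm]; exact hN m hm n hn⟩
  trans := by
    intro u w v h1 h2
    rw [bndRel, tendsto_gp_iff] at *
    intro T
    obtain ⟨N, hN⟩ := h1 (T + δ)
    obtain ⟨M, hM⟩ := h2 (T + δ)
    refine ⟨max N M, fun n hn m hm => ?_⟩
    have a := hN n ((le_max_left _ _).trans hn) (max N M) (le_max_left _ _)
    have b := hM (max N M) (le_max_right _ _) m ((le_max_right _ _).trans hm)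
    have c := hδ (u.1 n) (v.1 m) (w.1 (max N M)) o
    have d := le_min a b
    linarith

lemma mkB_eq_iff {X : Type*} [MetricSpace X] {δ : ℝ} (hδ : IsHyperbolicWith X δ)
    (o : X) (u v : DivSeq X o) : mkB o u = mkB o v ↔ bndRel o u v := by
  exact Quot.eq.trans (bndRel_equivalence hδ o).eqvGen_iff

lemma cobdd_of_not_bndRel {X : Type*} [MetricSpace X] {o : X} {u v : DivSeq X o}
    (h : ¬ bndRel o u v) :
    IsCoboundedUnder (· ≥ ·) atTop (fun pr : ℕ × ℕ => gp o (u.1 pr.1) (v.1 pr.2)) := by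
  rw [bndRel, Filter.tendsto_atTop] at h
  push Not at h
  obtain ⟨b, hb⟩ := h
  refine IsCoboundedUnder.of_frequently_le (a := b) ?_
  exact hb.mono fun x hx => le_of_lt (by simpa using hx)

lemma qB_nonneg {X : Type*} [MetricSpace X] (o : X) (ξ η : Boundary X o) : 0 ≤ qB o ξ η := by
  rw [qB]
  split_ifs
  · exact le_rfl
  · exact (Real.exp_pos _).le

lemma ev_of_qB_lt {X : Type*} [MetricSpace X] {δ : ℝ} (hδ : IsHyperbolicWith X δ)
    {o : X} {ξ η : Boundary X o} {s : ℝ} (h : qB o ξ η < s) {u v : DivSeq X o}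
    (hu : mkB o u = ξ) (hv : mkB o v = η) :
    ∃ N, ∀ n ≥ N, ∀ m ≥ N, -Real.log s < gp o (u.1 n) (v.1 m) := by
  have hs : 0 < s := (qB_nonneg o ξ η).trans_lt h
  by_cases he : ξ = η
  · have h1 : bndRel o u v := (mkB_eq_iff hδ o u v).1 (by rw [hu, hv, he])
    rw [bndRel, tendsto_gp_iff] at h1
    obtain ⟨N, hN⟩ := h1 (-Real.log s + 1)
    exact ⟨N, fun n hn m hm => by linarith [hN n hn m hm]⟩
  · rw [qB, if_neg he, ← Real.lt_log_iff_exp_lt hs] at h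
    have h1 : gpB o ξ η ≤
        Filter.liminf (fun pr : ℕ × ℕ => gp o (u.1 pr.1) (v.1 pr.2)) atTop := by
      refine csInf_le ⟨0, ?_⟩ ⟨u, v, hu, hv, rfl⟩
      rintro t ⟨u', v', hu', hv', rfl⟩
      refine le_liminf_of_le (cobdd_of_not_bndRel fun hb => he ?_)
        (Eventually.of_forall fun pr => gp_nonneg _ _ _)
      rw [← hu', ← hv']
      exact (mkB_eq_iff hδ o u' v').2 hb
    exact (evN _).1 (eventually_lt_of_lt_liminf (b := -Real.log s) (by linarith)
      (isBoundedUnder_of ⟨0, fun pr => gp_nonneg _ _ _⟩))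

lemma qB_le_of_ev {X : Type*} [MetricSpace X] {δ : ℝ} (hδ : IsHyperbolicWith X δ)
    {o : X} {ξ η : Boundary X o} {s : ℝ} (hs : 0 < s)
    (h : ∀ u v : DivSeq X o, mkB o u = ξ → mkB o v = η →
      ∃ N, ∀ n ≥ N, ∀ m ≥ N, -Real.log s ≤ gp o (u.1 n) (v.1 m)) : qB o ξ η ≤ s := by
  by_cases he : ξ = η
  · rw [qB, if_pos he]
    exact hs.le
  · rw [qB, if_neg he, ← Real.le_log_iff_exp_le hs]
    have : -Real.log s ≤ gpB o ξ η := by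
      refine le_csInf ?_ ?_
      · obtain ⟨u, hu⟩ := Quot.exists_rep ξ
        obtain ⟨v, hv⟩ := Quot.exists_rep η
        exact ⟨_, u, v, hu, hv, rfl⟩
      · rintro t ⟨u', v', hu', hv', rfl⟩
        refine le_liminf_of_le (cobdd_of_not_bndRel fun hb => he ?_)
          ((evN (fun n m => -Real.log s ≤ gp o (u'.1 n) (v'.1 m))).2 (h u' v' hu' hv'))
        rw [← hu', ← hv']
        exact (mkB_eq_iff hδ o u' v').2 hb
    linarith

lemma qB_tri {X : Type*} [MetricSpace X] {δ : ℝ} (hδ : IsHyperbolicWith X δ)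
    (o : X) (x y z : Boundary X o) :
    qB o y x ≤ Real.exp δ * max (qB o y z) (qB o x z) := by
  refine le_of_forall_gt_imp_ge_of_dense fun c hc => ?_
  have hm : max (qB o y z) (qB o x z) < c / Real.exp δ := by
    rw [lt_div_iff₀ (Real.exp_pos _)]
    linarith
  set s := c / Real.exp δ with hsdef
  have hs : 0 < s := ((qB_nonneg o y z).trans (le_max_left _ _)).trans_lt hm
  have hcs : c = s * Real.exp δ := by
    rw [hsdef]; field_simp
  refine qB_le_of_ev hδ (by rw [hcs]; positivity) fun u v hu hv => ?_
  obtain ⟨w, hw⟩ := Quot.exists_rep z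
  obtain ⟨N, hN⟩ := ev_of_qB_lt hδ ((le_max_left _ _).trans_lt hm) hu hw
  obtain ⟨M, hM⟩ := ev_of_qB_lt hδ ((le_max_right _ _).trans_lt hm) hv hw
  refine ⟨max N M, fun n hn m hm' => ?_⟩
  have a := hN n ((le_max_left _ _).trans hn) (max N M) (le_max_left _ _)
  have b := hM m ((le_max_right _ _).trans hm') (max N M) (le_max_right _ _)
  rw [gp_comm] at b
  have c' := hδ (u.1 n) (v.1 m) (w.1 (max N M)) o
  have d := lt_min a b
  rw [hcs, Real.log_mul hs.ne' (Real.exp_pos _).ne', Real.log_exp]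
  linarith

lemma mkB_of_close {X : Type*} [MetricSpace X] {δ : ℝ} (hδ : IsHyperbolicWith X δ)
    (o : X) (u : DivSeq X o) (x : ℕ → X)
    (hx : ∀ n : ℕ, ∃ M, ∀ k ≥ M, (n : ℝ) ≤ gp o (x n) (u.1 k)) :
    ∃ h : IsDivergent o x, mkB o ⟨x, h⟩ = mkB o u := by
  choose M hM using hx
  have h1 : IsDivergent o x := by
    rw [IsDivergent, tendsto_gp_iff]
    intro T
    obtain ⟨N, hN⟩ := exists_nat_ge (T + δ)
    refine ⟨N, fun n hn m hm => ?_⟩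
    have a := hM n (max (M n) (M m)) (le_max_left _ _)
    have b := hM m (max (M n) (M m)) (le_max_right _ _)
    rw [gp_comm] at b
    have c := hδ (x n) (x m) (u.1 (max (M n) (M m))) o
    have hn' : (N : ℝ) ≤ n := by exact_mod_cast hn
    have hm' : (N : ℝ) ≤ m := by exact_mod_cast hm
    have d := le_min (hn'.trans a) (hm'.trans b)
    linarith
  refine ⟨h1, (mkB_eq_iff hδ o _ _).2 ((tendsto_gp_iff o x u.1).2 ?_)⟩
  intro T
  obtain ⟨N, hN⟩ := exists_nat_ge (T + δ)
  obtain ⟨N', hN'⟩ := (tendsto_gp_iff o u.1 u.1).1 u.2 (T + δ)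
  refine ⟨max N N', fun n hn m hm => ?_⟩
  have a := hM n (max (M n) N') (le_max_left _ _)
  have b := hN' (max (M n) N') (le_max_right _ _) m ((le_max_right _ _).trans hm)
  have c := hδ (x n) (u.1 m) (u.1 (max (M n) N')) o
  have hn' : (N : ℝ) ≤ n := by exact_mod_cast (le_max_left _ _).trans hn
  have d := le_min ((hN.trans hn').trans a) b
  linarith

lemma qB_open {X : Type*} [MetricSpace X] {δ : ℝ} (hδ : IsHyperbolicWith X δ)
    (o : X) (ξ : Boundary X o) (r : ℝ) : QOpen (qB o) (qball (qB o) ξ r) := by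
  intro η hη
  have hη : qB o ξ η < r := hη
  by_contra hcon
  push Not at hcon
  obtain ⟨s, hs1, hs2⟩ := exists_between hη
  obtain ⟨s', hs'1, hs'2⟩ := exists_between hs2
  have hs0 : 0 < s := (qB_nonneg o ξ η).trans_lt hs1
  obtain ⟨u0, hu0⟩ := Quot.exists_rep ξ
  obtain ⟨w, hw⟩ := Quot.exists_rep η
  have key : ∀ n : ℕ, ∃ x y : X, gp o x y < -Real.log s' ∧
      (∃ M, ∀ k ≥ M, (n : ℝ) ≤ gp o x (u0.1 k)) ∧ (∃ M, ∀ k ≥ M, (n : ℝ) ≤ gp o y (w.1 k)) := by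
    intro n
    obtain ⟨ζ, hζ1, hζ2⟩ := Set.not_subset.1 (hcon (Real.exp (-n)) (Real.exp_pos _))
    have hζ1 : qB o η ζ < Real.exp (-n) := hζ1
    have hζ2 : r ≤ qB o ξ ζ := not_lt.1 hζ2
    have hnot : ¬ qB o ξ ζ ≤ s' := by linarith
    have := mt (qB_le_of_ev hδ (hs0.trans hs'1)) hnot
    push Not at this
    obtain ⟨u, v, hu, hv, huv⟩ := this
    have h1 : qB o ξ ξ < Real.exp (-n) := by
      rw [qB, if_pos rfl]; exact Real.exp_pos _
    obtain ⟨N1, hN1⟩ := ev_of_qB_lt hδ h1 hu hu0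
    obtain ⟨N2, hN2⟩ := ev_of_qB_lt hδ hζ1 hw hv
    rw [Real.log_exp, neg_neg] at hN1 hN2
    obtain ⟨i, hi, j, hj, hij⟩ := huv (max N1 N2)
    refine ⟨u.1 i, v.1 j, hij, ⟨N1, fun k hk => ?_⟩, N2, fun k hk => ?_⟩
    · exact (hN1 i ((le_max_left _ _).trans hi) k hk).le
    · rw [gp_comm]
      exact (hN2 k hk j ((le_max_right _ _).trans hj)).le
  choose x y hxy hx hy using key
  obtain ⟨dx, hdx⟩ := mkB_of_close hδ o u0 x hx
  obtain ⟨dy, hdy⟩ := mkB_of_close hδ o w y hy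
  obtain ⟨N, hN⟩ := ev_of_qB_lt hδ hs1 (hdx.trans hu0) (hdy.trans hw)
  have h1 := hN N le_rfl N le_rfl
  have h2 := hxy N
  have h3 := Real.log_lt_log hs0 hs'1
  change -Real.log s < gp o (x N) (y N) at h1
  linarith

lemma qball_qbb {X Xs : Type*} [MetricSpace X] [MetricSpace Xs] (o : X) (os : Xs)
    (ξ : Boundary X o × Boundary Xs os) (r : ℝ) :
    qball (qbb o os) ξ r = qball (qB o) ξ.1 r ×ˢ qball (qB os) ξ.2 r := by
  ext η
  exact max_lt_iff (b := qB o ξ.1 η.1) (c := qB os ξ.2 η.2) (a := r)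

lemma goodQ_qbb {X Xs : Type*} [MetricSpace X] [MetricSpace Xs] {δ δs : ℝ}
    (h0 : 0 ≤ δ) (hδ : IsHyperbolicWith X δ) (hδs : IsHyperbolicWith Xs δs) (o : X) (os : Xs) :
    GoodQ (qbb o os) (Real.exp (max δ δs)) where
  one_le := Real.one_le_exp (h0.trans (le_max_left _ _))
  self x := by simp [qbb, qB]
  tri x y z := by
    have e1 : Real.exp δ ≤ Real.exp (max δ δs) := Real.exp_le_exp.2 (le_max_left _ _)
    have e2 : Real.exp δs ≤ Real.exp (max δ δs) := Real.exp_le_exp.2 (le_max_right _ _)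
    refine max_le ((qB_tri hδ o x.1 y.1 z.1).trans ?_) ((qB_tri hδs os x.2 y.2 z.2).trans ?_)
    · refine mul_le_mul e1 (max_le_max (le_max_left _ _) (le_max_left _ _)) ?_ (Real.exp_pos _).le
      exact (qB_nonneg _ _ _).trans (le_max_left _ _)
    · refine mul_le_mul e2 (max_le_max (le_max_right _ _) (le_max_right _ _)) ?_
        (Real.exp_pos _).le
      exact (qB_nonneg _ _ _).trans (le_max_left _ _)
  meas x r := by
    rw [qball_qbb]
    have h1 : MeasurableSet (qball (qB o) x.1 r) :=
      MeasurableSpace.measurableSet_generateFrom ⟨x.1, r, rfl⟩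
    have h2 : MeasurableSet (qball (qB os) x.2 r) :=
      MeasurableSpace.measurableSet_generateFrom ⟨x.2, r, rfl⟩
    exact h1.prod h2
  op x r := by
    intro y hy
    rw [qball_qbb] at hy
    obtain ⟨a, ha, hsa⟩ := qB_open hδ o _ _ _ hy.1
    obtain ⟨b, hb, hsb⟩ := qB_open hδs os _ _ _ hy.2
    refine ⟨min a b, lt_min ha hb, ?_⟩
    rw [qball_qbb, qball_qbb]
    refine Set.prod_mono (Set.Subset.trans ?_ hsa) (Set.Subset.trans ?_ hsb)
    · exact fun z (hz : qB o y.1 z < _) => (hz.trans_le (min_le_left _ _) : qB o y.1 z < a)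
    · exact fun z (hz : qB os y.2 z < _) => (hz.trans_le (min_le_right _ _) : qB os y.2 z < b)

/-- Lemma 2.2, Bonk–Schramm density lemma: a weak Lebesgue density
property for Borel measures on a product of boundaries of hyperbolic spaces of bounded
growth. -/
theorem statement7
    (X Xs : Type*) [MetricSpace X] [MetricSpace Xs]
    (hX : IsHyperbolic X) (hXs : IsHyperbolic Xs)
    (hXb : HasBoundedGrowthAtSomeScale X) (hXsb : HasBoundedGrowthAtSomeScale Xs)
    (o : X) (os : Xs) :
    ∃ L : ℝ, 1 ≤ L ∧
      ∀ ν : Measure (Boundary X o × Boundary Xs os), IsProbabilityMeasure ν →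
      ∀ F : Set (Boundary X o × Boundary Xs os), MeasurableSet F → 0 < ν F →
      ∀ᵐ ξ ∂ν, ξ ∈ F → ∃ r0 : ℝ, 0 < r0 ∧ ∀ r : ℝ, 0 < r → r < r0 →
        (9 / 10 : ℝ≥0∞) * ν (qball (qbb o os) ξ r) ≤
          ν (F ∩ qball (qbb o os) ξ (L * r)) := by
  obtain ⟨δ, h0, hδ⟩ := hX
  obtain ⟨δs, -, hδs⟩ := hXs
  have hg := goodQ_qbb h0 hδ hδs o os
  refine ⟨3 * Real.exp (max δ δs), by linarith [hg.one_le], ?_⟩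
  intro ν hν F hF _
  refine hg.density
    (Set.preimage Prod.fst '' {s | ∃ ξ r, s = qball (qB o) ξ r} ∪
      Set.preimage Prod.snd '' {s | ∃ ξ r, s = qball (qB os) ξ r}) ?_ ?_ ν F hF
  · rw [← MeasurableSpace.generateFrom_sup_generateFrom, ← MeasurableSpace.comap_generateFrom,
      ← MeasurableSpace.comap_generateFrom]
    rfl
  · rintro s (⟨_, ⟨ξ, r, rfl⟩, rfl⟩ | ⟨_, ⟨ξ, r, rfl⟩, rfl⟩)
    · intro x hx
      obtain ⟨a, ha, hsa⟩ := qB_open hδ o _ _ _ hx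
      exact ⟨a, ha, fun z hz => hsa (show qB o x.1 z.1 < a from (le_max_left _ _).trans_lt hz)⟩
    · intro x hx
      obtain ⟨a, ha, hsa⟩ := qB_open hδs os _ _ _ hx
      exact ⟨a, ha, fun z hz => hsa (show qB os x.2 z.2 < a from (le_max_right _ _).trans_lt hz)⟩

end HMDim
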